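/- Let X be a three-dimensional normed space over ℝ or ℂ and Y ⊆ X a two-dimensional subspace with λ(Y,X) > 1. Then the minimal projection P : X → Y is unique, and moreover it is 2-strongly unique: there exists r > 0 such that ‖Q‖² ≥ ‖P‖² + r‖Q − P‖² for every projection Q : X → Y. -/

import Mathlib

open Metric Module

noncomputable section

variable {𝕜 : Type*} [RCLike 𝕜] {X : Type*} [NormedAddCommGroup X] [NormedSpace 𝕜 X]

def IsProjOnto (Y : Submodule 𝕜 X) (P : X →L[𝕜] X) : Prop :=
  (∀ x, P x ∈ Y) ∧ ∀ y ∈ Y, P y = y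

def relProjConst (Y : Submodule 𝕜 X) : ℝ :=
  sInf {c | ∃ P : X →L[𝕜] X, IsProjOnto Y P ∧ ‖P‖ = c}

def MinProjSet (Y : Submodule 𝕜 X) : Set (X →L[𝕜] X) :=
  {P | IsProjOnto Y P ∧ ‖P‖ = relProjConst Y}

/-!
Let `P` be a minimal projection and `V = L_Y(X,Y)` the space of differences of projections onto `Y`,
so that `‖P‖ ≤ ‖P + L‖` for all `L ∈ V`. Hahn–Banach on the quotient by `V` gives a functional of
norm at most one that vanishes on `V` and takes the value `‖P‖` at `P`. In finite dimensions it is a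
convex combination of functionals `T ↦ f (T x)` with `‖f‖, ‖x‖ ≤ 1`, that is, a Chalmers–Metcalf
functional `∑ α_i f_i(T x_i)` with `f_i (P x_i) = ‖P‖`. Expanding `|f_i((P + L) x_i)|²` and summing
gives `‖P‖² + ∑ α_i |f_i(L x_i)|² ≤ ‖P + L‖²`, so `P` is `2`-strongly unique as soon as
`‖L‖₀ = (∑ α_i |f_i(L x_i)|²)^(1/2)` is a norm on `V`.

For `‖P‖ > 1` no `x_i` lies in `Y`, so an `L ∈ V` is determined by its value at any `x_i`. It
remains to see that the `f_i` have no common zero in the plane `Y` except `0`. Otherwise their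
restrictions to `Y` are multiples of one functional, and testing the Chalmers–Metcalf functional on
rank-one elements of `V` forces `‖P‖ ≤ 1`.
-/

section ConvexHull

variable {E : Type*} [AddCommGroup E] [Module ℝ E]

/-- The set of convex combinations of `n` (not necessarily distinct) points of `s`. -/
def convexCombinations (s : Set E) (n : ℕ) : Set E :=
  (fun p : (Fin n → ℝ) × (Fin n → E) => ∑ i, p.1 i • p.2 i) ''
    (stdSimplex ℝ (Fin n) ×ˢ Set.univ.pi fun _ => s)

lemma isCompact_convexCombinations [TopologicalSpace E] [ContinuousAdd E] [ContinuousSMul ℝ E]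
    {s : Set E} (hs : IsCompact s) (n : ℕ) :
    IsCompact (convexCombinations s n) :=
  ((isCompact_stdSimplex ℝ (Fin n)).prod (isCompact_univ_pi fun _ => hs)).image (by fun_prop)

lemma exists_fin_pos_convex_combination [FiniteDimensional ℝ E] {s : Set E} {x : E}
    (hx : x ∈ convexHull ℝ s) :
    ∃ n ≤ finrank ℝ E + 1, ∃ (w : Fin n → ℝ) (z : Fin n → E),
      (∀ i, 0 < w i) ∧ ∑ i, w i = 1 ∧ (∀ i, z i ∈ s) ∧ ∑ i, w i • z i = x := by
  obtain ⟨ι, _, z, w, hz, hindep, hw, hw1, rfl⟩ := eq_pos_convex_span_of_mem_convexHull hx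
  have hcard : Fintype.card ι ≤ finrank ℝ E + 1 :=
    hindep.card_le_finrank_succ.trans (by gcongr; exact Submodule.finrank_le _)
  let e := (Fintype.equivFin ι).symm
  exact ⟨Fintype.card ι, hcard, w ∘ e, z ∘ e, fun i => hw (e i), (e.sum_comp w).trans hw1,
    fun i => hz ⟨e i, rfl⟩, e.sum_comp fun i => w i • z i⟩

lemma convexHull_eq_biUnion_convexCombinations [FiniteDimensional ℝ E] (s : Set E) :
    convexHull ℝ s = ⋃ n ∈ Set.Iic (finrank ℝ E + 1), convexCombinations s n := by
  refine subset_antisymm (fun x hx => ?_) (Set.iUnion₂_subset fun n _ => ?_)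
  · obtain ⟨n, hn, w, z, hw, hw1, hz, hsum⟩ := exists_fin_pos_convex_combination hx
    exact Set.mem_biUnion hn
      ⟨(w, z), ⟨⟨fun i => (hw i).le, hw1⟩, fun i _ => hz i⟩, hsum⟩
  · rintro _ ⟨⟨w, z⟩, ⟨⟨hw, hw1⟩, hz⟩, rfl⟩
    exact mem_convexHull_of_exists_fintype w z hw hw1 (fun i => hz i trivial) rfl

lemma isCompact_convexHull [TopologicalSpace E] [ContinuousAdd E] [ContinuousSMul ℝ E]
    [FiniteDimensional ℝ E] {s : Set E} (hs : IsCompact s) :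
    IsCompact (convexHull ℝ s) := by
  rw [convexHull_eq_biUnion_convexCombinations]
  exact (Set.finite_Iic _).isCompact_biUnion fun n _ => isCompact_convexCombinations hs n

end ConvexHull

section Duality

variable {E : Type*} [NormedAddCommGroup E] [NormedSpace 𝕜 E]
  {F : Type*} [NormedAddCommGroup F] [NormedSpace 𝕜 F]

lemma exists_dual_eq_norm_of_forall_norm_le_norm_add {V : Submodule 𝕜 E} {p : E}
    (hp : ∀ v ∈ V, ‖p‖ ≤ ‖p + v‖) :
    ∃ g : StrongDual 𝕜 E, ‖g‖ ≤ 1 ∧ (∀ v ∈ V, g v = 0) ∧ g p = (‖p‖ : 𝕜) := by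
  have hnorm : ‖V.mkQL p‖ = ‖p‖ := by
    refine le_antisymm (Submodule.Quotient.norm_mk_le V p) (QuotientAddGroup.le_norm_iff.2 ?_)
    intro q hq
    have hqp : q - p ∈ V := (Submodule.Quotient.eq V).1 hq
    simpa using hp _ hqp
  obtain ⟨g, hg, hgp⟩ := exists_dual_vector'' 𝕜 (V.mkQL p)
  refine ⟨g.comp V.mkQL, ?_, fun v hv => ?_, ?_⟩
  · refine ContinuousLinearMap.opNorm_le_bound _ zero_le_one fun v => ?_
    exact (g.le_of_opNorm_le hg _).trans (by gcongr; exact Submodule.Quotient.norm_mk_le V v)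
  · simp [(Submodule.Quotient.mk_eq_zero V).2 hv]
  · rw [ContinuousLinearMap.comp_apply, hgp, hnorm]

lemma inclusionInDoubleDual_surjective [FiniteDimensional 𝕜 E] :
    Function.Surjective (NormedSpace.inclusionInDoubleDual 𝕜 E) := by
  intro ℓ
  obtain ⟨v, hv⟩ := (evalEquiv 𝕜 E).surjective
    (ℓ.toLinearMap ∘ₗ (LinearMap.toContinuousLinearMap : (E →ₗ[𝕜] 𝕜) ≃ₗ[𝕜] _).toLinearMap)
  exact ⟨v, ContinuousLinearMap.ext fun g => LinearMap.congr_fun hv g.toLinearMap⟩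

lemma norm_apply_apply_le {f : StrongDual 𝕜 F} {x : E} (hf : ‖f‖ ≤ 1) (hx : ‖x‖ ≤ 1)
    (T : E →L[𝕜] F) : ‖f (T x)‖ ≤ ‖T‖ := by
  calc ‖f (T x)‖ ≤ 1 * ‖T x‖ := f.le_of_opNorm_le hf _
    _ ≤ ‖T‖ := by rw [one_mul]; exact T.unit_le_opNorm x hx

lemma opNorm_le_of_forall_re_apply_apply_le {T : E →L[𝕜] F} {s : ℝ}
    (h : ∀ f : StrongDual 𝕜 F, ‖f‖ ≤ 1 → ∀ x : E, ‖x‖ ≤ 1 → RCLike.re (f (T x)) ≤ s) :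
    ‖T‖ ≤ s := by
  have hs : 0 ≤ s := by simpa using h 0 (by simp) 0 (by simp)
  refine T.opNorm_le_of_unit_norm hs fun x hx => ?_
  obtain ⟨f, hf, hfx⟩ := exists_dual_vector'' 𝕜 (T x)
  simpa [hfx] using h f hf x hx.le

/-- The functional `T ↦ f (T x)` on operators attached to a pair `(f, x)`, in the literature
`f ⊗ x`. -/
def elementaryFunctional (p : StrongDual 𝕜 F × E) : StrongDual 𝕜 (E →L[𝕜] F) :=
  p.1.comp (ContinuousLinearMap.apply 𝕜 F p.2)

@[simp]
lemma elementaryFunctional_apply (p : StrongDual 𝕜 F × E) (T : E →L[𝕜] F) :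
    elementaryFunctional p T = p.1 (T p.2) := rfl

lemma continuous_elementaryFunctional :
    Continuous (elementaryFunctional : StrongDual 𝕜 F × E → StrongDual 𝕜 (E →L[𝕜] F)) := by
  unfold elementaryFunctional
  fun_prop

lemma closedBall_dual_subset_convexHull [FiniteDimensional 𝕜 E] {S : Set (StrongDual 𝕜 E)}
    (hS : IsCompact S) (hnorming : ∀ v s, (∀ g ∈ S, RCLike.re (g v) ≤ s) → ‖v‖ ≤ s) :
    closedBall (0 : StrongDual 𝕜 E) 1 ⊆ convexHull ℝ S := by
  intro g hg
  have : FiniteDimensional ℝ (StrongDual 𝕜 E) := Module.Finite.trans 𝕜 _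
  by_contra hmem
  obtain ⟨ℓ, s, hℓ, hs⟩ := RCLike.geometric_hahn_banach_closed_point (𝕜 := 𝕜)
    (convex_convexHull ℝ S) (isCompact_convexHull hS).isClosed hmem
  obtain ⟨v, rfl⟩ := inclusionInDoubleDual_surjective ℓ
  have hv : ‖v‖ ≤ s := hnorming v s fun e he => (hℓ e (subset_convexHull ℝ S he)).le
  have hgv : RCLike.re (g v) ≤ ‖v‖ := (RCLike.re_le_norm _).trans <| by
    simpa using g.le_of_opNorm_le (mem_closedBall_zero_iff.1 hg) v
  exact (hs.trans_le hgv).not_ge hv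

lemma exists_eq_sum_mul_of_norm_le_one [FiniteDimensional 𝕜 E] {S : Set (StrongDual 𝕜 E)}
    (hS : IsCompact S) (hnorming : ∀ v s, (∀ g ∈ S, RCLike.re (g v) ≤ s) → ‖v‖ ≤ s)
    {g : StrongDual 𝕜 E} (hg : ‖g‖ ≤ 1) :
    ∃ (n : ℕ) (α : Fin n → ℝ) (z : Fin n → StrongDual 𝕜 E),
      (∀ i, 0 < α i) ∧ ∑ i, α i = 1 ∧ (∀ i, z i ∈ S) ∧ ∀ v, g v = ∑ i, (α i : 𝕜) * z i v := by
  have : FiniteDimensional ℝ (StrongDual 𝕜 E) := Module.Finite.trans 𝕜 _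
  obtain ⟨n, -, α, z, hα, hα1, hz, rfl⟩ := exists_fin_pos_convex_combination
    (closedBall_dual_subset_convexHull hS hnorming (mem_closedBall_zero_iff.2 hg))
  exact ⟨n, α, z, hα, hα1, hz, fun v => by simp [RCLike.real_smul_eq_coe_mul]⟩

lemma exists_eq_sum_mul_apply_apply [FiniteDimensional 𝕜 E] [FiniteDimensional 𝕜 F]
    {g : StrongDual 𝕜 (E →L[𝕜] F)} (hg : ‖g‖ ≤ 1) :
    ∃ (n : ℕ) (α : Fin n → ℝ) (f : Fin n → StrongDual 𝕜 F) (x : Fin n → E),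
      (∀ i, 0 < α i) ∧ ∑ i, α i = 1 ∧ (∀ i, ‖f i‖ ≤ 1) ∧ (∀ i, ‖x i‖ ≤ 1) ∧
        ∀ T, g T = ∑ i, (α i : 𝕜) * f i (T (x i)) := by
  have : ProperSpace E := FiniteDimensional.proper 𝕜 E
  have : ProperSpace (StrongDual 𝕜 F) := FiniteDimensional.proper 𝕜 _
  obtain ⟨n, α, z, hα, hα1, hz, hgz⟩ := exists_eq_sum_mul_of_norm_le_one
    ((isCompact_closedBall (0 : StrongDual 𝕜 F × E) 1).image continuous_elementaryFunctional)
    (fun T s hT => opNorm_le_of_forall_re_apply_apply_le fun f hf x hx =>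
      hT _ ⟨(f, x), by simp [Prod.norm_def, hf, hx], rfl⟩) hg
  choose p hp hpz using hz
  have hnorm (i : Fin n) : ‖(p i).1‖ ≤ 1 ∧ ‖(p i).2‖ ≤ 1 := by
    simpa [Prod.norm_def] using hp i
  refine ⟨n, α, fun i => (p i).1, fun i => (p i).2, hα, hα1, fun i => (hnorm i).1,
    fun i => (hnorm i).2, fun T => ?_⟩
  simp only [hgz, ← hpz, elementaryFunctional_apply]

end Duality

section ChalmersMetcalf

variable {E : Type*} [NormedAddCommGroup E] [NormedSpace 𝕜 E]
  {F : Type*} [NormedAddCommGroup F] [NormedSpace 𝕜 F]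
  {V : Submodule 𝕜 (E →L[𝕜] F)} {P : E →L[𝕜] F}

/-- The weights `α`, functionals `f` and points `x` define a Chalmers–Metcalf functional
`T ↦ ∑ α_i f_i(T x_i)` for `P` relative to the space `V`: it vanishes on `V`, and each pair
`(f_i, x_i)` is extremal for `P`. The weights are normalized to sum to `1`; the functionals and
points are only asked to lie in the unit balls. -/
structure IsChalmersMetcalf {κ : Type*} [Fintype κ] (V : Submodule 𝕜 (E →L[𝕜] F))
    (P : E →L[𝕜] F) (α : κ → ℝ) (f : κ → StrongDual 𝕜 F) (x : κ → E) : Prop where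
  weight_pos : ∀ i, 0 < α i
  sum_weight : ∑ i, α i = 1
  norm_functional_le : ∀ i, ‖f i‖ ≤ 1
  norm_point_le : ∀ i, ‖x i‖ ≤ 1
  apply_eq_norm : ∀ i, f i (P (x i)) = (‖P‖ : 𝕜)
  sum_eq_zero : ∀ L ∈ V, ∑ i, (α i : 𝕜) * f i (L (x i)) = 0

lemma eq_ofReal_of_sum_mul_eq {κ : Type*} [Fintype κ] {α : κ → ℝ} {c : κ → 𝕜} {M : ℝ}
    (hα : ∀ i, 0 < α i) (hα1 : ∑ i, α i = 1) (hc : ∀ i, ‖c i‖ ≤ M)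
    (hsum : ∑ i, (α i : 𝕜) * c i = (M : 𝕜)) (i : κ) : c i = (M : 𝕜) := by
  have hre_le (j : κ) : RCLike.re (c j) ≤ M := (RCLike.re_le_norm _).trans (hc j)
  have hre_sum : ∑ j, α j * RCLike.re (c j) = ∑ j, α j * M := by
    rw [← Finset.sum_mul, hα1, one_mul]
    simpa only [map_sum, RCLike.re_ofReal_mul, RCLike.ofReal_re] using congrArg RCLike.re hsum
  have hre : RCLike.re (c i) = M := by
    have hterm := (Finset.sum_eq_sum_iff_of_le fun j _ =>
      mul_le_mul_of_nonneg_left (hre_le j) (hα j).le).1 hre_sum i (Finset.mem_univ i)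
    exact mul_left_cancel₀ (hα i).ne' hterm
  rw [← hre]
  exact (RCLike.re_eq_self_of_le ((hc i).trans_eq hre.symm)).symm

theorem exists_isChalmersMetcalf [FiniteDimensional 𝕜 E] [FiniteDimensional 𝕜 F]
    (hP : ∀ L ∈ V, ‖P‖ ≤ ‖P + L‖) :
    ∃ (n : ℕ) (α : Fin n → ℝ) (f : Fin n → StrongDual 𝕜 F) (x : Fin n → E),
      IsChalmersMetcalf V P α f x := by
  obtain ⟨g, hg, hgV, hgP⟩ := exists_dual_eq_norm_of_forall_norm_le_norm_add hP
  obtain ⟨n, α, f, x, hα, hα1, hf, hx, hgsum⟩ := exists_eq_sum_mul_apply_apply hg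
  exact ⟨n, α, f, x, {
    weight_pos := hα
    sum_weight := hα1
    norm_functional_le := hf
    norm_point_le := hx
    apply_eq_norm := eq_ofReal_of_sum_mul_eq hα hα1
      (fun i => norm_apply_apply_le (hf i) (hx i) P) ((hgsum P).symm.trans hgP)
    sum_eq_zero := fun L hL => (hgsum L).symm.trans (hgV L hL) }⟩

lemma exists_mul_norm_sq_le_sum [FiniteDimensional 𝕜 E] {κ : Type*} [Fintype κ] {α : κ → ℝ}
    (hα : ∀ i, 0 < α i) (g : κ → E →ₗ[𝕜] 𝕜) (hg : ∀ v, (∀ i, g i v = 0) → v = 0) :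
    ∃ r > (0 : ℝ), ∀ v, r * ‖v‖ ^ 2 ≤ ∑ i, α i * ‖g i v‖ ^ 2 := by
  let G : E →ₗ[𝕜] EuclideanSpace 𝕜 κ :=
    (WithLp.linearEquiv 2 𝕜 (κ → 𝕜)).symm.toLinearMap ∘ₗ
      LinearMap.pi fun i => (√(α i) : 𝕜) • g i
  have hGnorm (v : E) : ‖G v‖ ^ 2 = ∑ i, α i * ‖g i v‖ ^ 2 := by
    rw [EuclideanSpace.norm_sq_eq]
    refine Finset.sum_congr rfl fun i _ => ?_
    have hcoord : G v i = (√(α i) : 𝕜) * g i v := rfl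
    rw [hcoord, norm_mul, mul_pow, RCLike.norm_ofReal, sq_abs, Real.sq_sqrt (hα i).le]
  have hker : LinearMap.ker G = ⊥ := by
    refine LinearMap.ker_eq_bot'.2 fun v hv => hg v fun i => ?_
    have hcoord : (√(α i) : 𝕜) * g i v = 0 := congrArg (· i) hv
    refine (mul_eq_zero.1 hcoord).resolve_left ?_
    exact_mod_cast (Real.sqrt_pos.2 (hα i)).ne'
  obtain ⟨K, hK, hlip⟩ := G.exists_antilipschitzWith hker
  have : (0 : ℝ) < K := hK
  refine ⟨((K : ℝ) ^ 2)⁻¹, by positivity, fun v => ?_⟩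
  rw [inv_mul_le_iff₀ (by positivity), ← hGnorm, ← mul_pow]
  gcongr
  simpa using hlip.le_mul_dist v 0

namespace IsChalmersMetcalf

variable {κ : Type*} [Fintype κ] {α : κ → ℝ} {f : κ → StrongDual 𝕜 F} {x : κ → E}

lemma nonempty (h : IsChalmersMetcalf V P α f x) : Nonempty κ := by
  by_contra hκ
  have := not_nonempty_iff.1 hκ
  simpa using h.sum_weight

lemma norm_sq_add_sum_le (h : IsChalmersMetcalf V P α f x) {L : E →L[𝕜] F} (hL : L ∈ V) :
    ‖P‖ ^ 2 + ∑ i, α i * ‖f i (L (x i))‖ ^ 2 ≤ ‖P + L‖ ^ 2 := by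
  have hexpand (i : κ) : ‖f i ((P + L) (x i))‖ ^ 2 =
      ‖P‖ ^ 2 + 2 * ‖P‖ * RCLike.re (f i (L (x i))) + ‖f i (L (x i))‖ ^ 2 := by
    rw [add_apply, map_add, h.apply_eq_norm,
      RCLike.norm_sq_eq_def, RCLike.norm_sq_eq_def]
    simp only [map_add, RCLike.ofReal_re, RCLike.ofReal_im]
    ring
  have hre : ∑ i, α i * RCLike.re (f i (L (x i))) = 0 := by
    simpa only [map_sum, RCLike.re_ofReal_mul, map_zero] using
      congrArg RCLike.re (h.sum_eq_zero L hL)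
  calc ‖P‖ ^ 2 + ∑ i, α i * ‖f i (L (x i))‖ ^ 2
      = (∑ i, α i) * ‖P‖ ^ 2 + 2 * ‖P‖ * (∑ i, α i * RCLike.re (f i (L (x i))))
          + ∑ i, α i * ‖f i (L (x i))‖ ^ 2 := by rw [hre, h.sum_weight]; ring
    _ = ∑ i, α i * ‖f i ((P + L) (x i))‖ ^ 2 := by
        simp_rw [hexpand, Finset.sum_mul, Finset.mul_sum, ← Finset.sum_add_distrib]
        exact Finset.sum_congr rfl fun i _ => by ring
    _ ≤ ∑ i, α i * ‖P + L‖ ^ 2 := Finset.sum_le_sum fun i _ => by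
        have := (h.weight_pos i).le
        gcongr
        exact norm_apply_apply_le (h.norm_functional_le i) (h.norm_point_le i) _
    _ = ‖P + L‖ ^ 2 := by rw [← Finset.sum_mul, h.sum_weight, one_mul]

lemma exists_norm_sq_add_le [FiniteDimensional 𝕜 V] (h : IsChalmersMetcalf V P α f x)
    (hsep : ∀ L ∈ V, (∀ i, f i (L (x i)) = 0) → L = 0) :
    ∃ r > (0 : ℝ), ∀ L ∈ V, ‖P‖ ^ 2 + r * ‖L‖ ^ 2 ≤ ‖P + L‖ ^ 2 := by
  obtain ⟨r, hr, hle⟩ := exists_mul_norm_sq_le_sum (E := V) h.weight_pos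
    (fun i => (elementaryFunctional (f i, x i)).toLinearMap ∘ₗ V.subtype)
    fun L hL => Submodule.coe_eq_zero.1 (hsep L L.2 hL)
  exact ⟨r, hr, fun L hL =>
    (add_le_add_right (hle ⟨L, hL⟩) _).trans (h.norm_sq_add_sum_le hL)⟩

end IsChalmersMetcalf

end ChalmersMetcalf

section Projections

variable {Y : Submodule 𝕜 X} {P Q : X →L[𝕜] X}

/-- The space `L_Y(X,Y)` of operators into `Y` that vanish on `Y`, i.e. of the differences of
projections onto `Y`; as in `IsProjOnto`, its elements are encoded as maps `X → X`. -/
def projDifferences (Y : Submodule 𝕜 X) : Submodule 𝕜 (X →L[𝕜] X) where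
  carrier := {L | (∀ x, L x ∈ Y) ∧ ∀ y ∈ Y, L y = 0}
  zero_mem' := by simp
  add_mem' hL hM := ⟨fun x => Y.add_mem (hL.1 x) (hM.1 x), fun y hy => by
    simp [hL.2 y hy, hM.2 y hy]⟩
  smul_mem' c L hL := ⟨fun x => Y.smul_mem c (hL.1 x), fun y hy => by simp [hL.2 y hy]⟩

/-- `P` is an `a`-strongly unique minimal projection onto `Y`. The condition `IsProjOnto Y P` is
not included, and exponents are restricted to natural numbers. -/
def IsStronglyUnique (Y : Submodule 𝕜 X) (a : ℕ) (P : X →L[𝕜] X) : Prop :=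
  ∃ r > (0 : ℝ), ∀ Q : X →L[𝕜] X, IsProjOnto Y Q → ‖P‖ ^ a + r * ‖Q - P‖ ^ a ≤ ‖Q‖ ^ a

lemma IsProjOnto.sub_mem_projDifferences (hQ : IsProjOnto Y Q) (hP : IsProjOnto Y P) :
    Q - P ∈ projDifferences Y :=
  ⟨fun x => Y.sub_mem (hQ.1 x) (hP.1 x), fun y hy => by simp [hQ.2 y hy, hP.2 y hy]⟩

lemma IsProjOnto.add_of_mem_projDifferences (hP : IsProjOnto Y P) {L : X →L[𝕜] X}
    (hL : L ∈ projDifferences Y) : IsProjOnto Y (P + L) :=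
  ⟨fun x => Y.add_mem (hP.1 x) (hL.1 x), fun y hy => by simp [hP.2 y hy, hL.2 y hy]⟩

lemma IsProjOnto.relProjConst_le (hP : IsProjOnto Y P) : relProjConst Y ≤ ‖P‖ :=
  csInf_le ⟨0, by rintro _ ⟨Q, -, rfl⟩; exact norm_nonneg Q⟩ ⟨P, hP, rfl⟩

lemma norm_le_norm_add_of_mem_minProjSet (hP : P ∈ MinProjSet Y) {L : X →L[𝕜] X}
    (hL : L ∈ projDifferences Y) : ‖P‖ ≤ ‖P + L‖ :=
  hP.2.trans_le (hP.1.add_of_mem_projDifferences hL).relProjConst_le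

lemma IsStronglyUnique.eq_of_mem_minProjSet {a : ℕ} (h : IsStronglyUnique Y a P)
    (hP : P ∈ MinProjSet Y) (hQ : Q ∈ MinProjSet Y) : Q = P := by
  obtain ⟨r, hr, hle⟩ := h
  have hQP := hle Q hQ.1
  rw [hP.2, hQ.2, add_le_iff_nonpos_right] at hQP
  have hpow : ‖Q - P‖ ^ a = 0 :=
    le_antisymm (nonpos_of_mul_nonpos_right hQP hr) (by positivity)
  exact sub_eq_zero.1 (norm_eq_zero.1 (eq_zero_of_pow_eq_zero hpow))

lemma isClosed_setOf_isProjOnto (hY : IsClosed (Y : Set X)) :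
    IsClosed {P : X →L[𝕜] X | IsProjOnto Y P} := by
  simp only [IsProjOnto, Set.ofPred_and, Set.ofPred_forall]
  exact (isClosed_iInter fun x => hY.preimage (by fun_prop)).inter
    (isClosed_iInter fun y => isClosed_iInter fun _ =>
      isClosed_eq (by fun_prop) continuous_const)

lemma exists_isProjOnto [FiniteDimensional 𝕜 Y] : ∃ P : X →L[𝕜] X, IsProjOnto Y P := by
  obtain ⟨p, hp⟩ := Submodule.ClosedComplemented.of_finiteDimensional Y
  exact ⟨Y.subtypeL.comp p, fun x => (p x).2, fun y hy => congrArg Subtype.val (hp ⟨y, hy⟩)⟩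

lemma nonempty_minProjSet [FiniteDimensional 𝕜 X] (Y : Submodule 𝕜 X) :
    (MinProjSet Y).Nonempty := by
  have : ProperSpace (X →L[𝕜] X) := FiniteDimensional.proper 𝕜 _
  obtain ⟨P, hP, hdist⟩ := (isClosed_setOf_isProjOnto
    Y.closed_of_finiteDimensional).exists_infDist_eq_dist exists_isProjOnto 0
  refine ⟨P, hP, (hP.relProjConst_le).antisymm' (le_csInf ⟨_, P, hP, rfl⟩ ?_)⟩
  rintro _ ⟨Q, hQ, rfl⟩
  simpa [hdist] using infDist_le_dist_of_mem (x := (0 : X →L[𝕜] X))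
    (s := {Q | IsProjOnto Y Q}) hQ

lemma sup_span_singleton_eq_top (hY : finrank 𝕜 X = finrank 𝕜 Y + 1)
    {v : X} (hv : v ∉ Y) : Y ⊔ 𝕜 ∙ v = ⊤ := by
  have : FiniteDimensional 𝕜 X := .of_finrank_pos (by omega)
  have hlt : Y < Y ⊔ 𝕜 ∙ v := left_lt_sup.2 fun hle =>
    hv (hle (Submodule.mem_span_singleton_self v))
  refine Submodule.eq_top_of_finrank_eq (le_antisymm (Submodule.finrank_le _) ?_)
  exact hY.trans_le (Submodule.finrank_lt_finrank_of_lt hlt)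

lemma exists_forall_eq_smul_of_apply_eq_zero {K W : Type*} [Field K] [AddCommGroup W]
    [Module K W] (hW : finrank K W = 2) {w : W} (hw : w ≠ 0) :
    ∃ g : Dual K W, ∀ f : Dual K W, f w = 0 → ∃ a : K, f = a • g := by
  have : FiniteDimensional K W := .of_finrank_pos (by omega)
  have hquot : finrank K (W ⧸ K ∙ w) = finrank K K := by
    have := (K ∙ w).finrank_quotient_add_finrank
    rw [finrank_span_singleton hw] at this
    rw [finrank_self]
    omega
  let e := LinearEquiv.ofFinrankEq (W ⧸ K ∙ w) K hquot
  refine ⟨e ∘ₗ (K ∙ w).mkQ, fun f hf => ?_⟩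
  let f' : W ⧸ K ∙ w →ₗ[K] K := (K ∙ w).liftQ f (by simpa [Submodule.span_le] using hf)
  refine ⟨f' (e.symm 1), LinearMap.ext fun v => ?_⟩
  calc f v = f' (e.symm (e ((K ∙ w).mkQ v) • 1)) := by simp [f']
    _ = f' (e.symm 1) * e ((K ∙ w).mkQ v) := by
      rw [map_smul, map_smul, smul_eq_mul, mul_comm]

namespace IsChalmersMetcalf

variable {κ : Type*} [Fintype κ] {α : κ → ℝ} {f : κ → StrongDual 𝕜 X} {x : κ → X}

lemma norm_functional_point_le {V : Submodule 𝕜 (X →L[𝕜] X)}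
    (h : IsChalmersMetcalf V P α f x) (i j : κ) : ‖f i (x j)‖ ≤ 1 :=
  ((f i).unit_le_opNorm _ (h.norm_point_le j)).trans (h.norm_functional_le i)

lemma point_notMem (h : IsChalmersMetcalf (projDifferences Y) P α f x) (hP : IsProjOnto Y P)
    (hP1 : 1 < ‖P‖) (i : κ) : x i ∉ Y := by
  intro hxi
  have hval : ‖f i (x i)‖ = ‖P‖ := by
    rw [← hP.2 _ hxi, h.apply_eq_norm, RCLike.norm_ofReal, abs_norm]
  exact hP1.not_ge (hval.symm.trans_le (h.norm_functional_point_le i i))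

lemma sum_mul_apply_eq (h : IsChalmersMetcalf (projDifferences Y) P α f x)
    (hP : IsProjOnto Y P) (φ : StrongDual 𝕜 X) {y : X} (hy : y ∈ Y) :
    ∑ i, (α i : 𝕜) * (φ (x i) * f i y) = ∑ i, (α i : 𝕜) * (φ (P (x i)) * f i y) := by
  let L : X →L[𝕜] X := (φ.comp (.id 𝕜 X - P)).smulRight y
  have hL : L ∈ projDifferences Y :=
    ⟨fun _ => Y.smul_mem _ hy, fun z hz => by simp [L, hP.2 z hz]⟩
  rw [← sub_eq_zero, ← Finset.sum_sub_distrib, ← h.sum_eq_zero L hL]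
  refine Finset.sum_congr rfl fun i _ => ?_
  have hLx : f i (L (x i)) = (φ (x i) - φ (P (x i))) * f i y := by simp [L]
  rw [hLx]
  ring

lemma norm_le_one_of_proportional (h : IsChalmersMetcalf (projDifferences Y) P α f x)
    (hP : IsProjOnto Y P) (g : Dual 𝕜 Y) (a : κ → 𝕜) (hg : ∀ i, ∀ y : Y, f i y = a i * g y) :
    ‖P‖ ≤ 1 := by
  have : Nonempty κ := h.nonempty
  obtain ⟨k, hk⟩ := Finite.exists_max fun i => ‖a i‖
  have hfP (i j : κ) : f i (P (x j)) = a i * g ⟨P (x j), hP.1 (x j)⟩ := hg i ⟨_, hP.1 (x j)⟩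
  -- Proportionality of the `f i` on `Y` lets them exchange arguments there.
  have hswap (i : κ) : f k (P (x i)) * f i (P (x k)) = (‖P‖ : 𝕜) ^ 2 := by
    rw [sq]
    nth_rw 1 [← h.apply_eq_norm k, ← h.apply_eq_norm i]
    simp only [hfP]
    ring
  have hsum : ∑ i, (α i : 𝕜) * (f k (x i) * f i (P (x k))) = (‖P‖ : 𝕜) ^ 2 := by
    rw [h.sum_mul_apply_eq hP (f k) (hP.1 (x k))]
    simp_rw [hswap, ← Finset.sum_mul, ← RCLike.ofReal_sum, h.sum_weight, RCLike.ofReal_one,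
      one_mul]
  have hfPk (i : κ) : ‖f i (P (x k))‖ ≤ ‖P‖ := by
    calc ‖f i (P (x k))‖ ≤ ‖f k (P (x k))‖ := by
          rw [hfP, hfP, norm_mul, norm_mul]
          exact mul_le_mul_of_nonneg_right (hk i) (norm_nonneg _)
      _ = ‖P‖ := by rw [h.apply_eq_norm, RCLike.norm_ofReal, abs_norm]
  have hsq : ‖P‖ ^ 2 ≤ ‖P‖ := by
    calc ‖P‖ ^ 2 = ‖∑ i, (α i : 𝕜) * (f k (x i) * f i (P (x k)))‖ := by simp [hsum]
      _ ≤ ∑ i, α i * ‖P‖ := norm_sum_le_of_le _ fun i _ => by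
          rw [norm_mul, norm_mul, RCLike.norm_ofReal, abs_of_pos (h.weight_pos i)]
          have := (h.weight_pos i).le
          gcongr
          exact (mul_le_of_le_one_left (norm_nonneg _) (h.norm_functional_point_le k i)).trans
            (hfPk i)
      _ = ‖P‖ := by rw [← Finset.sum_mul, h.sum_weight, one_mul]
  nlinarith

lemma eq_zero_of_forall_apply_eq_zero (h : IsChalmersMetcalf (projDifferences Y) P α f x)
    (hP : IsProjOnto Y P) (hP1 : 1 < ‖P‖) (h2 : finrank 𝕜 Y = 2) {y : X} (hy : y ∈ Y)
    (hfy : ∀ i, f i y = 0) : y = 0 := by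
  by_contra hy0
  obtain ⟨g, hg⟩ := exists_forall_eq_smul_of_apply_eq_zero h2
    (w := ⟨y, hy⟩) (by simpa using hy0)
  choose a ha using fun i => hg ((f i).toLinearMap ∘ₗ Y.subtype) (hfy i)
  exact hP1.not_ge (h.norm_le_one_of_proportional hP g a fun i => LinearMap.congr_fun (ha i))

lemma eq_zero_of_mem_projDifferences (h : IsChalmersMetcalf (projDifferences Y) P α f x)
    (hP : IsProjOnto Y P) (hP1 : 1 < ‖P‖) (hcodim : finrank 𝕜 X = finrank 𝕜 Y + 1)
    (htotal : ∀ y ∈ Y, (∀ i, f i y = 0) → y = 0) {L : X →L[𝕜] X}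
    (hL : L ∈ projDifferences Y) (hfL : ∀ i, f i (L (x i)) = 0) : L = 0 := by
  have hdecomp (i : κ) (v : X) : ∃ c : 𝕜, L v = c • L (x i) := by
    have hv : v ∈ Y ⊔ 𝕜 ∙ x i := by
      rw [sup_span_singleton_eq_top hcodim (h.point_notMem hP hP1 i)]
      trivial
    obtain ⟨y, hy, w, hw, rfl⟩ := Submodule.mem_sup.1 hv
    obtain ⟨c, rfl⟩ := Submodule.mem_span_singleton.1 hw
    exact ⟨c, by simp [hL.2 y hy]⟩
  ext v
  refine htotal (L v) (hL.1 v) fun i => ?_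
  obtain ⟨c, hc⟩ := hdecomp i v
  rw [hc, map_smul, hfL, smul_zero]

theorem isStronglyUnique_two [FiniteDimensional 𝕜 X]
    (h : IsChalmersMetcalf (projDifferences Y) P α f x) (hP : IsProjOnto Y P)
    (hsep : ∀ L ∈ projDifferences Y, (∀ i, f i (L (x i)) = 0) → L = 0) :
    IsStronglyUnique Y 2 P := by
  obtain ⟨r, hr, hle⟩ := h.exists_norm_sq_add_le hsep
  refine ⟨r, hr, fun Q hQ => ?_⟩
  simpa using hle (Q - P) (hQ.sub_mem_projDifferences hP)

end IsChalmersMetcalf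

end Projections

/-- Let `X` be a three-dimensional normed space over `ℝ` or `ℂ` and `Y` a
two-dimensional subspace with `λ(Y, X) > 1`. Then the minimal projection `P` onto `Y`
is unique, and it is `2`-strongly unique: there is `r > 0` with
`‖Q‖² ≥ ‖P‖² + r ‖Q - P‖²` for every projection `Q` onto `Y`. -/
theorem dim_three_unique_and_two_strongly_unique [FiniteDimensional 𝕜 X]
    (h3 : finrank 𝕜 X = 3) (Y : Submodule 𝕜 X) (h2 : finrank 𝕜 Y = 2)
    (hlam : 1 < relProjConst Y) :
    ∃ P ∈ MinProjSet Y, (∀ Q ∈ MinProjSet Y, Q = P) ∧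
      ∃ r > (0 : ℝ), ∀ Q : X →L[𝕜] X, IsProjOnto Y Q →
        ‖P‖ ^ 2 + r * ‖Q - P‖ ^ 2 ≤ ‖Q‖ ^ 2 := by
  obtain ⟨P, hP⟩ := nonempty_minProjSet Y
  have hP1 : 1 < ‖P‖ := hlam.trans_eq hP.2.symm
  obtain ⟨n, α, f, x, h⟩ :=
    exists_isChalmersMetcalf fun L => norm_le_norm_add_of_mem_minProjSet hP (L := L)
  have htotal : ∀ y ∈ Y, (∀ i, f i y = 0) → y = 0 := fun y =>
    h.eq_zero_of_forall_apply_eq_zero hP.1 hP1 h2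
  have hcodim : finrank 𝕜 X = finrank 𝕜 Y + 1 := by rw [h3, h2]
  have hunique : IsStronglyUnique Y 2 P := h.isStronglyUnique_two hP.1 fun L =>
    h.eq_zero_of_mem_projDifferences hP.1 hP1 hcodim htotal
  exact ⟨P, hP, fun Q => hunique.eq_of_mem_minProjSet hP, hunique⟩
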